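/- Let 0 < a < b. Then there exist functions w₊, w₋ : [a,b] → ℝ, twice continuously differentiable on [a,b], such that: w₊'(a) = 0, w₊(b) = 0, w₊(r) > 0 for all r ∈ [a,b), and −𝓕(r, w₊''(r), w₊'(r)/r) = w₊(r)^p for all r ∈ (a,b); and w₋'(a) = 0, w₋(b) = 0, w₋(r) < 0 for all r ∈ [a,b), and −𝓕(r, w₋''(r), w₋'(r)/r) = −|w₋(r)|^p for all r ∈ (a,b). (Equivalently: the mixed boundary value problem F(x,D²u) + |u|^{p−1}u = 0 in the annulus A_{a,b}, ∂u/∂n = 0 on |x| = a, u = 0 on |x| = b, has a positive and a negative radial solution.) -/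

import Mathlib

open Real Set

/-- Uniform ellipticity of the radial form `𝓕(r, m, l)` of a uniformly elliptic operator. -/
def UnifElliptic (n : ℕ) (lam Lam : ℝ) (F : ℝ → ℝ → ℝ → ℝ) : Prop :=
  ∀ r : ℝ, 0 < r → ∀ m l s t : ℝ, 0 ≤ s → 0 ≤ t →
    lam * (s + ((n : ℝ) - 1) * t) ≤ F r (m + s) (l + t) - F r m l ∧
      F r (m + s) (l + t) - F r m l ≤ Lam * (s + ((n : ℝ) - 1) * t)

open scoped NNReal in
/-- A bounded, globally Lipschitz time-dependent vector field has a flow which is defined on the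
whole time interval and depends continuously on the initial value. -/
theorem exists_flow_of_lipschitzWith_of_bounded {E : Type*} [NormedAddCommGroup E]
    [NormedSpace ℝ E] [CompleteSpace E] {v : ℝ → E → E} {tmin t₀ tmax : ℝ} {K L : ℝ≥0}
    (ht₀ : t₀ ∈ Icc tmin tmax) (hlip : ∀ t ∈ Icc tmin tmax, LipschitzWith K (v t))
    (hcont : ∀ x, ContinuousOn (fun t => v t x) (Icc tmin tmax))
    (hbound : ∀ t ∈ Icc tmin tmax, ∀ x, ‖v t x‖ ≤ L) (R : ℝ≥0) :
    ∃ α : E → ℝ → E,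
      (∀ x ∈ Metric.closedBall (0 : E) R, α x t₀ = x ∧
        (∀ t ∈ Ioo tmin tmax, HasDerivAt (α x) (v t (α x t)) t) ∧
        ContinuousOn (fun t => v t (α x t)) (Icc tmin tmax)) ∧
      ∀ t ∈ Icc tmin tmax, ContinuousOn (fun x => α x t) (Metric.closedBall (0 : E) R) := by
  have hT : 0 ≤ max (tmax - t₀) (t₀ - tmin) := le_max_of_le_left (sub_nonneg.2 ht₀.2)
  have hpl : IsPicardLindelof v (⟨t₀, ht₀⟩ : Icc tmin tmax) (0 : E)
      (L * (max (tmax - t₀) (t₀ - tmin)).toNNReal + R) R L K :=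
    { lipschitzOnWith := fun t ht => (hlip t ht).lipschitzOnWith
      continuousOn := fun x _ => hcont x
      norm_le := fun t ht x _ => hbound t ht x
      mul_max_le := by simp [Real.coe_toNNReal _ hT] }
  obtain ⟨α, hα, L', hL'⟩ :=
    hpl.exists_forall_mem_closedBall_eq_hasDerivWithinAt_lipschitzOnWith
  have hv : ContinuousOn (Function.uncurry v) (Icc tmin tmax ×ˢ univ) :=
    continuousOn_prod_of_continuousOn_lipschitzOnWith' _ K
      (fun t ht => (hlip t ht).lipschitzOnWith) fun x _ => hcont x
  refine ⟨α, fun x hx => ⟨(hα x hx).1, fun t ht => ?_, ?_⟩, fun t ht => (hL' t ht).continuousOn⟩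
  · exact ((hα x hx).2 t (Ioo_subset_Icc_self ht)).hasDerivAt (Icc_mem_nhds ht.1 ht.2)
  · exact hv.comp (continuousOn_id.prodMk fun t ht => ((hα x hx).2 t ht).continuousWithinAt)
      fun t ht => ⟨ht, mem_univ _⟩

/-- Comparison of two functions whose derivatives are ordered. -/
theorem le_of_hasDerivAt_le {f f' g g' : ℝ → ℝ} {a b : ℝ}
    (hf : ∀ x ∈ Icc a b, HasDerivAt f (f' x) x) (hg : ∀ x ∈ Icc a b, HasDerivAt g (g' x) x)
    (ha : f a ≤ g a) (h : ∀ x ∈ Icc a b, f' x ≤ g' x) : ∀ x ∈ Icc a b, f x ≤ g x :=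
  fun _ hx => image_le_of_deriv_right_le_deriv_boundary
    (fun y hy => (hf y hy).continuousAt.continuousWithinAt)
    (fun y hy => (hf y (Ico_subset_Icc_self hy)).hasDerivWithinAt) ha
    (fun y hy => (hg y hy).continuousAt.continuousWithinAt)
    (fun y hy => (hg y (Ico_subset_Icc_self hy)).hasDerivWithinAt)
    (fun y hy => h y (Ico_subset_Icc_self hy)) hx

/-- A function with nonpositive derivative on a closed interval is antitone there. -/
theorem antitoneOn_Icc_of_hasDerivAt_nonpos {f f' : ℝ → ℝ} {a b : ℝ}
    (hf : ∀ x ∈ Icc a b, HasDerivAt f (f' x) x) (h : ∀ x ∈ Icc a b, f' x ≤ 0) :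
    AntitoneOn f (Icc a b) :=
  antitoneOn_of_hasDerivWithinAt_nonpos (convex_Icc a b)
    (fun x hx => (hf x hx).continuousAt.continuousWithinAt)
    (fun x hx => (hf x (interior_subset hx)).hasDerivWithinAt)
    (fun x hx => h x (interior_subset hx))

namespace UnifElliptic

variable {n : ℕ} {lam Lam : ℝ} {F : ℝ → ℝ → ℝ → ℝ}

theorem mul_abs_sub_le (h : UnifElliptic n lam Lam F) {r : ℝ} (hr : 0 < r) (m m' l : ℝ) :
    lam * |m - m'| ≤ |F r m l - F r m' l| := by
  rcases le_total m' m with hm | hm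
  · have := (h r hr m' l (m - m') 0 (sub_nonneg.2 hm) le_rfl).1
    simp only [add_sub_cancel, mul_zero, add_zero] at this
    rw [abs_of_nonneg (sub_nonneg.2 hm)]
    exact this.trans (le_abs_self _)
  · have := (h r hr m l (m' - m) 0 (sub_nonneg.2 hm) le_rfl).1
    simp only [add_sub_cancel, mul_zero, add_zero] at this
    rw [abs_sub_comm m, abs_sub_comm (F r m l), abs_of_nonneg (sub_nonneg.2 hm)]
    exact this.trans (le_abs_self _)

theorem abs_sub_le_mul (h : UnifElliptic n lam Lam F) (hlam : 0 ≤ lam) (hn : 1 ≤ n) {r : ℝ}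
    (hr : 0 < r) (m l l' : ℝ) :
    |F r m l - F r m l'| ≤ Lam * ((n : ℝ) - 1) * |l - l'| := by
  have hn' : (0 : ℝ) ≤ (n : ℝ) - 1 := by
    have : (1 : ℝ) ≤ n := by exact_mod_cast hn
    linarith
  wlog hl : l' ≤ l generalizing l l'
  · rw [abs_sub_comm, abs_sub_comm l]
    exact this l' l (le_of_not_ge hl)
  have := h r hr m l' 0 (l - l') le_rfl (sub_nonneg.2 hl)
  simp only [add_sub_cancel, zero_add, add_zero] at this
  have h0 : 0 ≤ lam * (((n : ℝ) - 1) * (l - l')) :=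
    mul_nonneg hlam (mul_nonneg hn' (sub_nonneg.2 hl))
  rw [abs_of_nonneg (h0.trans this.1), abs_of_nonneg (sub_nonneg.2 hl), mul_assoc]
  exact this.2

/-- A uniformly elliptic operator can be solved for the second derivative. -/
theorem exists_eq (h : UnifElliptic n lam Lam F) (hlam : 0 < lam)
    (hF : Continuous fun x : ℝ × ℝ × ℝ => F x.1 x.2.1 x.2.2) {r : ℝ} (hr : 0 < r) (y l : ℝ) :
    ∃ m, F r m l = y := by
  have hc : Continuous fun m => F r m l :=
    hF.comp (continuous_const.prodMk (continuous_id.prodMk continuous_const))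
  refine hc.surjective ?_ ?_ y
  · refine Filter.tendsto_atTop_mono' _ (f₁ := fun m => lam * m + F r 0 l) ?_ ?_
    · filter_upwards [Filter.eventually_ge_atTop 0] with m hm
      have := (h r hr 0 l m 0 hm le_rfl).1
      simp only [zero_add, mul_zero, add_zero] at this
      linarith
    · exact Filter.tendsto_atTop_add_const_right _ _ (Filter.tendsto_id.const_mul_atTop hlam)
  · refine Filter.tendsto_atBot_mono' _ (f₁ := fun m => lam * m + F r 0 l) ?_ ?_
    · filter_upwards [Filter.eventually_le_atBot 0] with m hm
      have := (h r hr m l (-m) 0 (by linarith) le_rfl).1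
      simp only [add_neg_cancel, mul_zero, add_zero] at this
      linarith
    · exact Filter.tendsto_atBot_add_const_right _ _ (Filter.tendsto_id.const_mul_atBot hlam)

theorem neg_div_le (h : UnifElliptic n lam Lam F) (hlam : 0 < lam) (hn : 1 ≤ n)
    (hF0 : ∀ r, F r 0 0 = 0) {r m l φ : ℝ} (hr : 0 < r) (hl : l ≤ 0) (hφ : 0 ≤ φ)
    (hm : F r m l = -φ) : -(φ / lam) ≤ m := by
  have hn' : (0 : ℝ) ≤ (n : ℝ) - 1 := by
    have : (1 : ℝ) ≤ n := by exact_mod_cast hn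
    linarith
  rcases le_total 0 m with h0 | h0
  · exact (neg_nonpos.2 (by positivity)).trans h0
  · have := (h r hr m l (-m) (-l) (by linarith) (by linarith)).1
    rw [add_neg_cancel, add_neg_cancel, hF0, hm] at this
    have h1 : 0 ≤ lam * (((n : ℝ) - 1) * -l) :=
      mul_nonneg hlam.le (mul_nonneg hn' (by linarith))
    rw [neg_le, le_div_iff₀ hlam]
    linarith

theorem le_neg_mul_sub_div (h : UnifElliptic n lam Lam F) (hlam : 0 < lam) (hlL : lam ≤ Lam)
    (hn : 1 ≤ n) (hF0 : ∀ r, F r 0 0 = 0) {r m l φ : ℝ} (hr : 0 < r) (hl : l ≤ 0) (hφ : 0 ≤ φ)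
    (hm : F r m l = -φ) : m ≤ -(Lam * ((n : ℝ) - 1) / lam * l) - φ / Lam := by
  have hn' : (0 : ℝ) ≤ (n : ℝ) - 1 := by
    have : (1 : ℝ) ≤ n := by exact_mod_cast hn
    linarith
  have hLam : 0 < Lam := hlam.trans_le hlL
  rcases le_total 0 m with h0 | h0
  · have h1 := (h r hr 0 l m 0 h0 le_rfl).1
    have h2 := (h r hr 0 l 0 (-l) le_rfl (by linarith)).2
    simp only [zero_add, add_zero, mul_zero, add_neg_cancel, hF0, hm] at h1 h2
    have h3 : φ / Lam ≤ φ / lam := by gcongr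
    have h4 : m ≤ (-(Lam * ((n : ℝ) - 1) * l) - φ) / lam := by
      rw [le_div_iff₀ hlam]
      linarith
    have h5 : (-(Lam * ((n : ℝ) - 1) * l) - φ) / lam
        = -(Lam * ((n : ℝ) - 1) / lam * l) - φ / lam := by ring
    linarith
  · have h1 := (h r hr m l (-m) (-l) (by linarith) (by linarith)).2
    rw [add_neg_cancel, add_neg_cancel, hF0, hm] at h1
    have h2 : φ / Lam ≤ -m + ((n : ℝ) - 1) * -l := by
      rw [div_le_iff₀ hLam]
      linarith
    have h3 : (n : ℝ) - 1 ≤ Lam * ((n : ℝ) - 1) / lam := by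
      rw [le_div_iff₀ hlam]
      nlinarith
    nlinarith

/-- The reflected operator `-F(r, -m, -l)` is uniformly elliptic with the same constants. -/
theorem reflect (h : UnifElliptic n lam Lam F) :
    UnifElliptic n lam Lam fun r m l => -F r (-m) (-l) := by
  intro r hr m l s t hs ht
  have := h r hr (-(m + s)) (-(l + t)) s t hs ht
  rw [show -(m + s) + s = -m by ring, show -(l + t) + t = -l by ring] at this
  constructor <;> linarith [this.1, this.2]

end UnifElliptic

/-- The truncated power `s ↦ (min (s⁺) Γ) ^ p`. -/
noncomputable def truncPow (Γ p s : ℝ) : ℝ := max 0 (min s Γ) ^ p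

theorem truncPow_nonneg (Γ p s : ℝ) : 0 ≤ truncPow Γ p s :=
  rpow_nonneg (le_max_left _ _) _

theorem truncPow_le_rpow {Γ p s γ : ℝ} (hp : 0 ≤ p) (hγ : 0 ≤ γ) (h : s ≤ γ) :
    truncPow Γ p s ≤ γ ^ p :=
  rpow_le_rpow (le_max_left _ _) (max_le hγ ((min_le_left _ _).trans h)) hp

theorem truncPow_le {Γ p : ℝ} (hΓ : 0 ≤ Γ) (hp : 0 ≤ p) (s : ℝ) : truncPow Γ p s ≤ Γ ^ p :=
  rpow_le_rpow (le_max_left _ _) (max_le hΓ (min_le_right _ _)) hp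

theorem truncPow_eq {Γ p s : ℝ} (h0 : 0 ≤ s) (h : s ≤ Γ) : truncPow Γ p s = s ^ p := by
  rw [truncPow, min_eq_left h, max_eq_right h0]

open scoped NNReal in
theorem exists_lipschitzWith_truncPow {Γ p : ℝ} (hΓ : 0 ≤ Γ) (hp : 1 ≤ p) :
    ∃ K : ℝ≥0, LipschitzWith K (truncPow Γ p) := by
  have h0 : 0 ≤ p * Γ ^ (p - 1) := by positivity
  have hL : LipschitzOnWith (p * Γ ^ (p - 1)).toNNReal (fun x : ℝ => x ^ p) (Icc 0 Γ) := by
    refine (convex_Icc 0 Γ).lipschitzOnWith_of_nnnorm_hasDerivWithin_le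
      (fun x _ => (hasDerivAt_rpow_const (Or.inr hp)).hasDerivWithinAt) fun x hx => ?_
    rw [← NNReal.coe_le_coe, coe_nnnorm, Real.coe_toNNReal _ h0, norm_of_nonneg]
    · gcongr
      · exact hx.1
      · exact hx.2
    · have := hx.1
      positivity
  have hc : LipschitzWith 1 fun s : ℝ => max 0 (min s Γ) :=
    (LipschitzWith.id.min_const Γ).const_max 0
  refine ⟨(p * Γ ^ (p - 1)).toNNReal * 1, ?_⟩
  rw [← lipschitzOnWith_univ] at hc ⊢
  exact hL.comp hc fun s _ => ⟨le_max_left _ _, max_le hΓ (min_le_right _ _)⟩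

open scoped NNReal in
/-- The initial value problems for the truncated equation, with initial value `γ ∈ [0, Γ]` and
initial slope `0` at `a`, have global solutions on `[a, b]` depending continuously on `γ`. -/
theorem exists_truncated_solutions {n : ℕ} (hn : 1 ≤ n) {lam Lam p : ℝ} (hlam : 0 < lam)
    (hlL : lam ≤ Lam) (hp : 1 ≤ p) {F : ℝ → ℝ → ℝ → ℝ}
    (hFcont : Continuous fun x : ℝ × ℝ × ℝ => F x.1 x.2.1 x.2.2)
    (hF0 : ∀ r : ℝ, F r 0 0 = 0) (hFell : UnifElliptic n lam Lam F)
    {a b : ℝ} (ha : 0 < a) (hab : a < b) {Γ M : ℝ} (hΓ : 0 ≤ Γ) (hM : 0 ≤ M) :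
    ∃ w u g : ℝ → ℝ → ℝ,
      (∀ γ ∈ Icc 0 Γ, w γ a = γ ∧ u γ a = 0 ∧ ContinuousOn (g γ) (Icc a b) ∧
        ∀ r ∈ Icc a b, HasDerivAt (w γ) (max (-M) (min (u γ r) 0)) r ∧
          HasDerivAt (u γ) (g γ r) r ∧
          F r (g γ r) (max (-M) (min (u γ r) 0) / r) = -truncPow Γ p (w γ r)) ∧
      ContinuousOn (fun γ => w γ b) (Icc 0 Γ) := by
  have hLam : 0 < Lam := hlam.trans_le hlL
  have hn' : (0 : ℝ) ≤ (n : ℝ) - 1 := by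
    have : (1 : ℝ) ≤ n := by exact_mod_cast hn
    linarith
  set N : ℝ := (n : ℝ) - 1 with hN
  set a₀ : ℝ := a / 2 with ha₀
  have ha₀' : 0 < a₀ := by positivity
  have hsub : Icc a b ⊆ Ioo a₀ (b + 1) := fun t ht =>
    ⟨by linarith [ht.1], by linarith [ht.2]⟩
  have hpos : ∀ t ∈ Icc a₀ (b + 1), 0 < t := fun t ht => ha₀'.trans_le ht.1
  choose! G hG using fun (r : ℝ) (hr : 0 < r) (y l : ℝ) => hFell.exists_eq hlam hFcont hr y l
  have hG_lip : ∀ r, 0 < r → ∀ y l y' l', |G r y l - G r y' l'| ≤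
      (|y - y'| + Lam * N * |l - l'|) / lam := by
    intro r hr y l y' l'
    rw [le_div_iff₀ hlam, mul_comm]
    have h1 := hFell.mul_abs_sub_le hr (G r y l) (G r y' l') l
    have h2 := hFell.abs_sub_le_mul hlam.le hn hr (G r y' l') l' l
    rw [hG r hr] at h1 h2
    have h3 := abs_sub_le y y' (F r (G r y' l') l)
    rw [abs_sub_comm l'] at h2
    linarith
  have hG_zero : ∀ r, 0 < r → G r 0 0 = 0 := by
    intro r hr
    have := hFell.mul_abs_sub_le hr (G r 0 0) 0 0
    rw [hG r hr, hF0, sub_zero, sub_zero, abs_zero] at this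
    have h2 := abs_nonneg (G r 0 0)
    exact abs_eq_zero.1 (le_antisymm (by nlinarith) h2)
  have hG_cont : ∀ y, ∀ l : ℝ → ℝ, ContinuousOn l (Icc a₀ (b + 1)) →
      ContinuousOn (fun t => G t y (l t)) (Icc a₀ (b + 1)) := by
    intro y l hl t ht
    have hFt : Filter.Tendsto (fun s => |F s (G t y (l t)) (l s) - y| / lam)
        (nhdsWithin t (Icc a₀ (b + 1))) (nhds 0) := by
      have h1 : ContinuousWithinAt (fun s => |F s (G t y (l t)) (l s) - y| / lam)
          (Icc a₀ (b + 1)) t :=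
        ((hFcont.continuousAt.comp_continuousWithinAt (continuousWithinAt_id.prodMk
          (continuousWithinAt_const.prodMk (hl t ht)))).sub
            continuousWithinAt_const).abs.div_const _
      have h2 := h1.tendsto
      simpa only [hG t (hpos t ht), sub_self, abs_zero, zero_div] using h2
    refine tendsto_iff_dist_tendsto_zero.2 (squeeze_zero' (Filter.Eventually.of_forall
      fun _ => dist_nonneg) ?_ hFt)
    filter_upwards [self_mem_nhdsWithin] with s hs
    rw [dist_comm, Real.dist_eq, le_div_iff₀ hlam, mul_comm]
    have := hFell.mul_abs_sub_le (hpos s hs) (G t y (l t)) (G s y (l s)) (l s)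
    rwa [hG s (hpos s hs)] at this
  obtain ⟨K₁, hK₁⟩ := exists_lipschitzWith_truncPow hΓ hp
  have hc_lip : ∀ u u' : ℝ, |max (-M) (min u 0) - max (-M) (min u' 0)| ≤ |u - u'| := fun u u' => by
    have : LipschitzWith 1 fun u : ℝ => max (-M) (min u 0) :=
      (LipschitzWith.id.min_const 0).const_max (-M)
    simpa [Real.dist_eq] using this.dist_le_mul u u'
  have hc_bound : ∀ u : ℝ, |max (-M) (min u 0)| ≤ M := fun u =>
    abs_le.2 ⟨le_max_left _ _, max_le (by linarith) ((min_le_right _ _).trans hM)⟩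
  have hdiv : ∀ t ∈ Icc a₀ (b + 1), ∀ x B : ℝ, |x| ≤ B → |x / t| ≤ B / a₀ := by
    intro t ht x B hx
    rw [abs_div, abs_of_pos (hpos t ht)]
    exact div_le_div₀ ((abs_nonneg x).trans hx) hx ha₀' ht.1
  let v : ℝ → ℝ × ℝ → ℝ × ℝ := fun t x =>
    (max (-M) (min x.2 0), G t (-truncPow Γ p x.1) (max (-M) (min x.2 0) / t))
  obtain ⟨α, hα, hα_cont⟩ := exists_flow_of_lipschitzWith_of_bounded (v := v) (t₀ := a)
    (tmin := a₀) (tmax := b + 1) (K := (1 + (K₁ + Lam * N / a₀) / lam).toNNReal)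
    (L := (M + (Γ ^ p + Lam * N * (M / a₀)) / lam).toNNReal)
    ⟨by linarith, by linarith⟩
    (by
      intro t ht
      have h0 : (0 : ℝ) ≤ (K₁ + Lam * N / a₀) / lam := by positivity
      refine LipschitzWith.of_dist_le_mul fun x y => ?_
      rw [Real.coe_toNNReal _ (by positivity), Prod.dist_eq]
      have hx1 : |x.1 - y.1| ≤ dist x y := le_max_left _ _
      have hx2 : |x.2 - y.2| ≤ dist x y := le_max_right _ _
      have hd : 0 ≤ dist x y := dist_nonneg
      have hc := (hc_lip x.2 y.2).trans hx2
      refine max_le ?_ ?_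
      · rw [Real.dist_eq]
        nlinarith
      · rw [Real.dist_eq]
        refine (hG_lip t (hpos t ht) _ _ _ _).trans ?_
        have h1 : |-truncPow Γ p x.1 - -truncPow Γ p y.1| ≤ K₁ * dist x y := by
          rw [neg_sub_neg, abs_sub_comm]
          exact (hK₁.dist_le_mul x.1 y.1).trans (by gcongr; exact hx1)
        have h2 : |max (-M) (min x.2 0) / t - max (-M) (min y.2 0) / t| ≤ dist x y / a₀ := by
          rw [← sub_div]
          exact hdiv t ht _ _ hc
        calc _ ≤ (K₁ * dist x y + Lam * N * (dist x y / a₀)) / lam := by gcongr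
          _ = (K₁ + Lam * N / a₀) / lam * dist x y := by ring
          _ ≤ _ := by nlinarith)
    (fun x => continuousOn_const.prodMk (hG_cont _ _
      (continuousOn_const.div continuousOn_id fun t ht => (hpos t ht).ne')))
    (by
      intro t ht x
      rw [Real.coe_toNNReal _ (by positivity), Prod.norm_def]
      have h0 : 0 ≤ (Γ ^ p + Lam * N * (M / a₀)) / lam := by positivity
      refine max_le ?_ ?_
      · rw [Real.norm_eq_abs]
        linarith [hc_bound x.2]
      · rw [Real.norm_eq_abs]
        have h1 := hG_lip t (hpos t ht) (-truncPow Γ p x.1) (max (-M) (min x.2 0) / t) 0 0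
        rw [hG_zero t (hpos t ht), sub_zero, sub_zero, sub_zero, abs_neg,
          abs_of_nonneg (truncPow_nonneg _ _ _)] at h1
        have h2 := truncPow_le hΓ (by linarith : 0 ≤ p) x.1
        have h3 := hdiv t ht _ _ (hc_bound x.2)
        have h4 : (truncPow Γ p x.1 + Lam * N * |max (-M) (min x.2 0) / t|) / lam ≤
            (Γ ^ p + Lam * N * (M / a₀)) / lam := by gcongr
        linarith)
    Γ.toNNReal
  have hmem : ∀ γ ∈ Icc 0 Γ, ((γ, 0) : ℝ × ℝ) ∈ Metric.closedBall (0 : ℝ × ℝ) Γ.toNNReal := by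
    intro γ hγ
    rw [mem_closedBall_zero_iff, Real.coe_toNNReal _ hΓ, Prod.norm_def]
    simpa [abs_of_nonneg hγ.1] using ⟨hγ.2, hΓ⟩
  refine ⟨fun γ r => (α (γ, 0) r).1, fun γ r => (α (γ, 0) r).2,
    fun γ r => (v r (α (γ, 0) r)).2, fun γ hγ => ?_, ?_⟩
  · obtain ⟨h1, h2, h3⟩ := hα _ (hmem γ hγ)
    refine ⟨congrArg Prod.fst h1, congrArg Prod.snd h1, ?_, fun r hr => ⟨?_, ?_, ?_⟩⟩
    · exact (continuous_snd.comp_continuousOn h3).mono (hsub.trans Ioo_subset_Icc_self)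
    · exact (hasFDerivAt_fst (p := α (γ, 0) r)).comp_hasDerivAt r (h2 r (hsub hr))
    · exact (hasFDerivAt_snd (p := α (γ, 0) r)).comp_hasDerivAt r (h2 r (hsub hr))
    · exact hG r (ha.trans_le hr.1) _ _
  · exact continuous_fst.comp_continuousOn ((hα_cont b (Ioo_subset_Icc_self
      (hsub (right_mem_Icc.2 hab.le)))).comp (by fun_prop) hmem)

/-- The truncation of the slope is inactive along solutions of the truncated equation, and these
satisfy two-sided differential inequalities. -/
theorem truncated_solution_bounds {n : ℕ} (hn : 1 ≤ n) {lam Lam p : ℝ} (hlam : 0 < lam)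
    (hlL : lam ≤ Lam) (hp : 0 ≤ p) {F : ℝ → ℝ → ℝ → ℝ}
    (hF0 : ∀ r : ℝ, F r 0 0 = 0) (hFell : UnifElliptic n lam Lam F)
    {a b : ℝ} (ha : 0 < a) {Γ : ℝ} (hΓ : 0 ≤ Γ) {w u g : ℝ → ℝ} (hua : u a = 0)
    (hu : ∀ r ∈ Icc a b, HasDerivAt u (g r) r)
    (heq : ∀ r ∈ Icc a b,
      F r (g r) (max (-(Γ ^ p / lam * (b - a))) (min (u r) 0) / r) = -truncPow Γ p (w r)) :
    ∀ r ∈ Icc a b, max (-(Γ ^ p / lam * (b - a))) (min (u r) 0) = u r ∧ u r ≤ 0 ∧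
      -(truncPow Γ p (w r) / lam) ≤ g r ∧
      g r ≤ -(Lam * ((n : ℝ) - 1) / lam / a * u r) - truncPow Γ p (w r) / Lam := by
  have hLam : 0 < Lam := hlam.trans_le hlL
  have hn' : (0 : ℝ) ≤ (n : ℝ) - 1 := by
    have : (1 : ℝ) ≤ n := by exact_mod_cast hn
    linarith
  have hC : 0 ≤ Γ ^ p / lam := by positivity
  set c : ℝ → ℝ := fun x => max (-(Γ ^ p / lam * (b - a))) (min x 0) with hc
  have hpos : ∀ r ∈ Icc a b, 0 < r := fun r hr => ha.trans_le hr.1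
  have hc0 : ∀ r ∈ Icc a b, c (u r) / r ≤ 0 := fun r hr => by
    have hba : 0 ≤ b - a := by linarith [hr.1, hr.2]
    exact div_nonpos_of_nonpos_of_nonneg
      (max_le (neg_nonpos.2 (by positivity)) (min_le_right _ _)) (hpos r hr).le
  have hlow : ∀ r ∈ Icc a b, -(truncPow Γ p (w r) / lam) ≤ g r := fun r hr =>
    hFell.neg_div_le hlam hn hF0 (hpos r hr) (hc0 r hr) (truncPow_nonneg _ _ _) (heq r hr)
  have hup : ∀ r ∈ Icc a b,
      g r ≤ -(Lam * ((n : ℝ) - 1) / lam * (c (u r) / r)) - truncPow Γ p (w r) / Lam :=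
    fun r hr => hFell.le_neg_mul_sub_div hlam hlL hn hF0 (hpos r hr) (hc0 r hr)
      (truncPow_nonneg _ _ _) (heq r hr)
  have hu0 : ∀ r ∈ Icc a b, u r ≤ 0 := by
    intro r hr
    have hε : ∀ ε > 0, u r ≤ ε * (r - a) := by
      intro ε hε
      refine image_le_of_deriv_right_lt_deriv_boundary (f := u) (f' := g)
        (B := fun x => ε * (x - a)) (B' := fun _ => ε)
        (fun x hx => (hu x hx).continuousAt.continuousWithinAt)
        (fun x hx => (hu x (Ico_subset_Icc_self hx)).hasDerivWithinAt) (by simp [hua])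
        (fun x => by simpa using ((hasDerivAt_id x).sub_const a).const_mul ε) ?_ hr
      intro x hx hux
      have hx' := Ico_subset_Icc_self hx
      have hux0 : 0 ≤ u x := by
        rw [hux]
        exact mul_nonneg hε.le (by linarith [hx.1])
      have hba : 0 ≤ b - a := by linarith [hx.1, hx.2]
      have hcx : c (u x) = 0 := by
        simp only [hc]
        rw [min_eq_right hux0, max_eq_right (neg_nonpos.2 (by positivity))]
      have h1 := hup x hx'
      rw [hcx, zero_div, mul_zero, neg_zero, zero_sub] at h1
      have h2 : 0 ≤ truncPow Γ p (w x) / Lam := div_nonneg (truncPow_nonneg _ _ _) hLam.le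
      linarith
    refine le_of_forall_pos_le_add fun δ hδ => ?_
    have hra : 0 ≤ r - a := sub_nonneg.2 hr.1
    have h1 := hε (δ / (r - a + 1)) (by positivity)
    have h2 : δ / (r - a + 1) * (r - a) ≤ δ := by
      rw [div_mul_eq_mul_div, div_le_iff₀ (by linarith)]
      nlinarith
    linarith
  have hulow : ∀ r ∈ Icc a b, -(Γ ^ p / lam * (b - a)) ≤ u r := by
    intro r hr
    have h1 := le_of_hasDerivAt_le (f := fun x => -(Γ ^ p / lam) * (x - a))
      (f' := fun _ => -(Γ ^ p / lam)) (g := u) (g' := g) (a := a) (b := b)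
      (fun x _ => by simpa using ((hasDerivAt_id x).sub_const a).const_mul (-(Γ ^ p / lam)))
      hu (by simp [hua])
      (fun x hx => (neg_le_neg (div_le_div_of_nonneg_right (truncPow_le hΓ hp _)
        hlam.le)).trans (hlow x hx)) r hr
    nlinarith [hr.2]
  intro r hr
  have hcr : c (u r) = u r := by
    simp only [hc]
    rw [min_eq_left (hu0 r hr), max_eq_right (hulow r hr)]
  refine ⟨hcr, hu0 r hr, hlow r hr, (hup r hr).trans ?_⟩
  have hK : 0 ≤ Lam * ((n : ℝ) - 1) / lam := by positivity
  have h1 : u r / a ≤ u r / r := by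
    rw [div_le_div_iff₀ ha (hpos r hr)]
    nlinarith [hr.1, hu0 r hr]
  have h2 : Lam * ((n : ℝ) - 1) / lam / a * u r = Lam * ((n : ℝ) - 1) / lam * (u r / a) := by ring
  rw [hcr, h2]
  linarith [mul_le_mul_of_nonneg_left h1 hK]

section DecreasingSolutions

variable {w u g : ℝ → ℝ} {a b κ : ℝ}

/-- If `w'' ≤ -κ w'`, then `exp (κ (r - a)) w'(r)` is antitone. -/
theorem antitoneOn_exp_mul_of_le (hu : ∀ r ∈ Icc a b, HasDerivAt u (g r) r)
    (hg : ∀ r ∈ Icc a b, g r ≤ -(κ * u r)) :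
    AntitoneOn (fun r => exp (κ * (r - a)) * u r) (Icc a b) := by
  refine antitoneOn_Icc_of_hasDerivAt_nonpos
    (f' := fun r => exp (κ * (r - a)) * κ * u r + exp (κ * (r - a)) * g r)
    (fun r hr => ?_) fun r hr => ?_
  · have h1 : HasDerivAt (fun r => κ * (r - a)) κ r := by
      simpa using ((hasDerivAt_id r).sub_const a).const_mul κ
    exact h1.exp.mul (hu r hr)
  · have := exp_pos (κ * (r - a))
    nlinarith [hg r hr]

/-- A solution of `w'' ≥ -C`, `w'(a) = 0`, satisfies `w(b) ≥ w(a) - C (b - a) ^ 2`. -/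
theorem sub_mul_sq_le_of_neg_le {C : ℝ} (hab : a ≤ b) (hC : 0 ≤ C) (hua : u a = 0)
    (hw : ∀ r ∈ Icc a b, HasDerivAt w (u r) r) (hu : ∀ r ∈ Icc a b, HasDerivAt u (g r) r)
    (hg : ∀ r ∈ Icc a b, -C ≤ g r) : w a - C * (b - a) ^ 2 ≤ w b := by
  have h1 : ∀ r ∈ Icc a b, -C * (b - a) ≤ u r := fun r hr => by
    have := le_of_hasDerivAt_le (f := fun x => -C * (x - a)) (f' := fun _ => -C)
      (fun x _ => by simpa using ((hasDerivAt_id x).sub_const a).const_mul (-C))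
      hu (by simp [hua]) hg r hr
    nlinarith [hr.2]
  have h2 := le_of_hasDerivAt_le (f := fun x => w a + -C * (b - a) * (x - a))
    (f' := fun _ => -C * (b - a))
    (fun x _ => by
      simpa using (((hasDerivAt_id x).sub_const a).const_mul (-C * (b - a))).const_add (w a))
    hw (by simp) h1 b (right_mem_Icc.2 hab)
  linarith [h2, show -C * (b - a) * (b - a) = -(C * (b - a) ^ 2) by ring]

/-- A decreasing function with `w'' ≤ -κ w'` which reaches its final value zero from a positive
initial value does so only at the final point. -/
theorem pos_of_eq_zero_right (hw : ∀ r ∈ Icc a b, HasDerivAt w (u r) r)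
    (hu : ∀ r ∈ Icc a b, HasDerivAt u (g r) r) (hg : ∀ r ∈ Icc a b, g r ≤ -(κ * u r))
    (hu0 : ∀ r ∈ Icc a b, u r ≤ 0) (hwa : 0 < w a) (hwb : w b = 0) :
    ∀ r ∈ Ico a b, 0 < w r := by
  intro r hr
  have hab : a ≤ b := hr.1.trans hr.2.le
  have hr' := Ico_subset_Icc_self hr
  have hanti : AntitoneOn w (Icc a b) := antitoneOn_Icc_of_hasDerivAt_nonpos hw hu0
  have hz := antitoneOn_exp_mul_of_le hu hg
  have hwr : 0 ≤ w r := hwb ▸ hanti hr' (right_mem_Icc.2 hab) hr.2.le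
  refine hwr.lt_of_ne' fun hr0 => ?_
  have har : a < r := hr.1.lt_of_ne fun h => by
    rw [← h] at hr0
    exact hwa.ne' hr0
  obtain ⟨ξ, hξ, hξ'⟩ := exists_hasDerivAt_eq_slope w u har
    (fun x hx => (hw x ⟨hx.1, hx.2.trans hr.2.le⟩).continuousAt.continuousWithinAt)
    fun x hx => hw x ⟨hx.1.le, hx.2.le.trans hr.2.le⟩
  obtain ⟨η, hη, hη'⟩ := exists_hasDerivAt_eq_slope w u hr.2
    (fun x hx => (hw x ⟨hr.1.trans hx.1, hx.2⟩).continuousAt.continuousWithinAt)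
    fun x hx => hw x ⟨hr.1.trans hx.1.le, hx.2.le⟩
  have hξ0 : u ξ < 0 := by
    rw [hξ', hr0]
    exact div_neg_of_neg_of_pos (by linarith) (by linarith)
  rw [hwb, hr0, sub_zero, zero_div] at hη'
  have h1 := hz (a := ξ) ⟨hξ.1.le, hξ.2.le.trans hr.2.le⟩ (b := η)
    ⟨hr.1.trans hη.1.le, hη.2.le⟩ (hξ.2.le.trans hη.1.le)
  simp only [hη', mul_zero] at h1
  exact absurd h1 (not_le.2 (mul_neg_of_pos_of_neg (exp_pos _) hξ0))

/-- If `w'' ≤ -κ w' - φ(w)`, `w'(a) = 0` and `w` is nonnegative up to `b`, then `φ` cannot be too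
large on the range of values of `w` near `a`. -/
theorem mul_sq_le_of_nonneg_right {φ : ℝ → ℝ} (hab : a < b) (hκ : 0 ≤ κ) (hua : u a = 0)
    (hw : ∀ r ∈ Icc a b, HasDerivAt w (u r) r) (hu : ∀ r ∈ Icc a b, HasDerivAt u (g r) r)
    (hu0 : ∀ r ∈ Icc a b, u r ≤ 0) (hφ : ∀ s, 0 ≤ φ s)
    (hg : ∀ r ∈ Icc a b, g r ≤ -(κ * u r) - φ (w r)) (hwb : 0 ≤ w b)
    {q : ℝ} (hq : 0 ≤ q)
    (hφq : ∀ s ∈ Icc (w a / (1 + exp (κ * (b - a)))) (w a), q ≤ φ s) :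
    q / exp (κ * (b - a)) / 2 * ((b - a) / 2) ^ 2 ≤ w a := by
  set E := exp (κ * (b - a)) with hE
  have hE0 : 0 < E := exp_pos _
  have hmid : (a + b) / 2 ∈ Icc a b := ⟨by linarith, by linarith⟩
  set m := (a + b) / 2 with hm
  have ham : a ≤ m := hmid.1
  have hmb : m ≤ b := hmid.2
  have hma : m - a = (b - a) / 2 := by rw [hm]; ring
  have hbm : b - m = (b - a) / 2 := by rw [hm]; ring
  have ha' : a ∈ Icc a b := left_mem_Icc.2 hab.le
  have hb' : b ∈ Icc a b := right_mem_Icc.2 hab.le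
  have hanti : AntitoneOn w (Icc a b) := antitoneOn_Icc_of_hasDerivAt_nonpos hw hu0
  have hz := antitoneOn_exp_mul_of_le hu fun r hr => (hg r hr).trans
    (sub_le_self _ (hφ _))
  set z : ℝ → ℝ := fun r => exp (κ * (r - a)) * u r with hz_def
  have hz0 : ∀ r ∈ Icc a b, z r ≤ 0 := fun r hr =>
    mul_nonpos_of_nonneg_of_nonpos (exp_pos _).le (hu0 r hr)
  have hexp1 : ∀ r ∈ Icc a b, 1 ≤ exp (κ * (r - a)) := fun r hr =>
    one_le_exp (mul_nonneg hκ (sub_nonneg.2 hr.1))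
  have hexpE : ∀ r ∈ Icc a b, exp (κ * (r - a)) ≤ E := fun r hr =>
    exp_le_exp.2 (by nlinarith [hr.2])
  have hzu : ∀ r ∈ Icc a b, z r ≤ u r := fun r hr => by
    have h1 := hexp1 r hr
    have h2 := hu0 r hr
    simp only [hz_def]
    nlinarith
  have huz : ∀ r ∈ Icc a b, u r ≤ z r / E := fun r hr => by
    have h1 := hexpE r hr
    have h2 := hu0 r hr
    rw [le_div_iff₀ hE0]
    simp only [hz_def]
    nlinarith
  have hleft : w a + z m * (m - a) ≤ w m :=
    le_of_hasDerivAt_le (f := fun x => w a + z m * (x - a)) (f' := fun _ => z m) (b := m)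
      (fun x _ => by
        simpa using (((hasDerivAt_id x).sub_const a).const_mul (z m)).const_add (w a))
      (fun x hx => hw x ⟨hx.1, hx.2.trans hmb⟩) (by simp)
      (fun x hx => (hz ⟨hx.1, hx.2.trans hmb⟩ hmid hx.2).trans (hzu x ⟨hx.1, hx.2.trans hmb⟩))
      m (right_mem_Icc.2 ham)
  have hright : w b ≤ w m + z m / E * (b - m) :=
    le_of_hasDerivAt_le (g := fun x => w m + z m / E * (x - m)) (g' := fun _ => z m / E) (a := m)
      (fun x hx => hw x ⟨ham.trans hx.1, hx.2⟩)
      (fun x _ => by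
        simpa using (((hasDerivAt_id x).sub_const m).const_mul (z m / E)).const_add (w m))
      (by simp)
      (fun x hx => (huz x ⟨ham.trans hx.1, hx.2⟩).trans (div_le_div_of_nonneg_right
        (hz hmid ⟨ham.trans hx.1, hx.2⟩ hx.1) hE0.le))
      b (right_mem_Icc.2 hmb)
  have hwm : w a / (1 + E) ≤ w m := by
    rw [div_le_iff₀ (by positivity)]
    have h1 : 0 ≤ E * (w m + z m / E * (b - m)) := mul_nonneg hE0.le (hwb.trans hright)
    have h2 : E * (w m + z m / E * (b - m)) = E * w m + z m * (b - m) := by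
      field_simp
    rw [hma] at hleft
    rw [h2, hbm] at h1
    linarith
  have hzq : ∀ r ∈ Icc a m, z r ≤ -q * (r - a) := by
    refine le_of_hasDerivAt_le
      (f' := fun r => exp (κ * (r - a)) * κ * u r + exp (κ * (r - a)) * g r)
      (g' := fun _ => -q) (fun r hr => ?_)
      (fun x _ => by simpa using ((hasDerivAt_id x).sub_const a).const_mul (-q))
      (by simp [hz_def, hua]) fun r hr => ?_
    · have h1 : HasDerivAt (fun r => κ * (r - a)) κ r := by
        simpa using ((hasDerivAt_id r).sub_const a).const_mul κ
      exact h1.exp.mul (hu r ⟨hr.1, hr.2.trans hmb⟩)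
    · have hr' : r ∈ Icc a b := ⟨hr.1, hr.2.trans hmb⟩
      have h1 := hexp1 r hr'
      have h2 : q ≤ φ (w r) := hφq _ ⟨hwm.trans (hanti hr' hmid hr.2), hanti ha' hr' hr.1⟩
      have h3 := hg r hr'
      nlinarith
  have huq : w m ≤ w a + -(q / E / 2) * (m - a) ^ 2 :=
    le_of_hasDerivAt_le (g := fun x => w a + -(q / E / 2) * (x - a) ^ 2)
      (g' := fun x => -(q / E) * (x - a)) (b := m)
      (fun x hx => hw x ⟨hx.1, hx.2.trans hmb⟩)
      (fun x _ => by
        have h := ((((hasDerivAt_id x).sub_const a).pow 2).const_mul (-(q / E / 2))).const_add (w a)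
        refine h.congr_deriv ?_
        simp
        ring)
      (by simp)
      (fun x hx => (huz x ⟨hx.1, hx.2.trans hmb⟩).trans (by
        have := div_le_div_of_nonneg_right (hzq x hx) hE0.le
        refine this.trans_eq ?_
        ring))
      m (right_mem_Icc.2 ham)
  have hwm0 : 0 ≤ w m := hwb.trans (hanti hmid hb' hmb)
  rw [← hma]
  linarith

end DecreasingSolutions

/-- The positive solution of the mixed boundary value problem, by shooting from `a`. -/
theorem exists_pos_mixed_bvp {n : ℕ} (hn : 1 ≤ n) {lam Lam p : ℝ} (hlam : 0 < lam)
    (hlL : lam ≤ Lam) (hp : 1 < p) {F : ℝ → ℝ → ℝ → ℝ}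
    (hFcont : Continuous fun x : ℝ × ℝ × ℝ => F x.1 x.2.1 x.2.2)
    (hF0 : ∀ r : ℝ, F r 0 0 = 0) (hFell : UnifElliptic n lam Lam F)
    {a b : ℝ} (ha : 0 < a) (hab : a < b) :
    ∃ w w' w'' : ℝ → ℝ,
      (∀ r ∈ Icc a b, HasDerivAt w (w' r) r) ∧
      (∀ r ∈ Icc a b, HasDerivAt w' (w'' r) r) ∧
      ContinuousOn w'' (Icc a b) ∧
      w' a = 0 ∧ w b = 0 ∧
      (∀ r ∈ Ico a b, 0 < w r) ∧
      (∀ r ∈ Icc a b, -F r (w'' r) (w' r / r) = w r ^ p) := by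
  have hLam : 0 < Lam := hlam.trans_le hlL
  have hp0 : 0 < p := by linarith
  have hn' : (0 : ℝ) ≤ (n : ℝ) - 1 := by
    have : (1 : ℝ) ≤ n := by exact_mod_cast hn
    linarith
  have hba : 0 < b - a := sub_pos.2 hab
  set κ : ℝ := Lam * ((n : ℝ) - 1) / lam / a with hκ_def
  have hκ : 0 ≤ κ := by positivity
  set E : ℝ := exp (κ * (b - a)) with hE
  have hE0 : 0 < E := exp_pos _
  let γ : ℝ → ℝ := fun A => A ^ (1 / (p - 1))
  have hγ_pos : ∀ A, 0 < A → 0 < γ A := fun A hA => rpow_pos_of_pos hA _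
  have hγ_pow : ∀ A, 0 < A → γ A ^ p = A * γ A := fun A hA => by
    have h1 : 0 < p - 1 := by linarith
    simp only [γ]
    rw [← rpow_mul hA.le, ← rpow_one_add' hA.le (by positivity)]
    congr 1
    field_simp
    ring
  set c : ℝ := (1 / (1 + E)) ^ p / Lam / E / 2 * ((b - a) / 2) ^ 2 with hc
  have hc0 : 0 < c := by positivity
  set A₀ : ℝ := min (lam / (2 * (b - a) ^ 2)) (2 / c) with hA₀
  have hA₀_pos : 0 < A₀ := lt_min (by positivity) (by positivity)
  have hA₁_pos : 0 < 2 / c := by positivity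
  set Γ : ℝ := γ (2 / c) with hΓ_def
  have hΓ : 0 < Γ := hγ_pos _ hA₁_pos
  have hγΓ : γ A₀ ≤ Γ :=
    rpow_le_rpow hA₀_pos.le (min_le_right _ _) (by
      have : 0 < p - 1 := by linarith
      positivity)
  have hM : 0 ≤ Γ ^ p / lam * (b - a) := by positivity
  obtain ⟨w, u, g, hsol, hcont⟩ :=
    exists_truncated_solutions hn hlam hlL hp.le hFcont hF0 hFell ha hab hΓ.le hM
  have hbd : ∀ s ∈ Icc 0 Γ, _ := fun s hs =>
    truncated_solution_bounds hn hlam hlL hp0.le hF0 hFell ha hΓ.le (hsol s hs).2.1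
      (fun r hr => ((hsol s hs).2.2.2 r hr).2.1) fun r hr => ((hsol s hs).2.2.2 r hr).2.2
  have hw : ∀ s ∈ Icc 0 Γ, ∀ r ∈ Icc a b, HasDerivAt (w s) (u s r) r := fun s hs r hr => by
    have := ((hsol s hs).2.2.2 r hr).1
    rwa [(hbd s hs r hr).1] at this
  have hu : ∀ s ∈ Icc 0 Γ, ∀ r ∈ Icc a b, HasDerivAt (u s) (g s r) r := fun s hs r hr =>
    ((hsol s hs).2.2.2 r hr).2.1
  have hu0 : ∀ s ∈ Icc 0 Γ, ∀ r ∈ Icc a b, u s r ≤ 0 := fun s hs r hr => (hbd s hs r hr).2.1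
  have hanti : ∀ s ∈ Icc 0 Γ, AntitoneOn (w s) (Icc a b) := fun s hs =>
    antitoneOn_Icc_of_hasDerivAt_nonpos (hw s hs) (hu0 s hs)
  have ha' : a ∈ Icc a b := left_mem_Icc.2 hab.le
  have hb' : b ∈ Icc a b := right_mem_Icc.2 hab.le
  have hws : ∀ s ∈ Icc 0 Γ, ∀ r ∈ Icc a b, w s r ≤ s := fun s hs r hr =>
    (hanti s hs ha' hr hr.1).trans_eq (hsol s hs).1
  have hsmall_mem : γ A₀ ∈ Icc 0 Γ := ⟨(hγ_pos _ hA₀_pos).le, hγΓ⟩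
  have hΓ_mem : Γ ∈ Icc 0 Γ := right_mem_Icc.2 hΓ.le
  have hsmall : 0 ≤ w (γ A₀) b := by
    have hγ0 := hγ_pos _ hA₀_pos
    have h1 := sub_mul_sq_le_of_neg_le (C := γ A₀ ^ p / lam) hab.le (by positivity)
      (hsol _ hsmall_mem).2.1 (hw _ hsmall_mem) (hu _ hsmall_mem) fun r hr =>
      (neg_le_neg (div_le_div_of_nonneg_right
        (truncPow_le_rpow hp0.le hγ0.le (hws _ hsmall_mem r hr)) hlam.le)).trans
        (hbd _ hsmall_mem r hr).2.2.1
    rw [(hsol _ hsmall_mem).1, hγ_pow _ hA₀_pos] at h1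
    have h2 : A₀ * (b - a) ^ 2 / lam ≤ 1 / 2 := by
      have h3 : A₀ ≤ lam / (2 * (b - a) ^ 2) := min_le_left _ _
      rw [le_div_iff₀ (by positivity)] at h3
      rw [div_le_iff₀ hlam]
      linarith
    have h4 : A₀ * γ A₀ / lam * (b - a) ^ 2 = A₀ * (b - a) ^ 2 / lam * γ A₀ := by ring
    rw [h4] at h1
    nlinarith
  have hlarge : w Γ b ≤ 0 := by
    by_contra! hpos
    have h1 := mul_sq_le_of_nonneg_right (φ := fun s => truncPow Γ p s / Lam)
      (q := (Γ / (1 + E)) ^ p / Lam) hab hκ (hsol _ hΓ_mem).2.1 (hw _ hΓ_mem) (hu _ hΓ_mem)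
      (hu0 _ hΓ_mem) (fun s => div_nonneg (truncPow_nonneg _ _ _) hLam.le)
      (fun r hr => (hbd _ hΓ_mem r hr).2.2.2) hpos.le (by positivity) (by
        rw [(hsol _ hΓ_mem).1]
        intro s hs
        have h0 : 0 ≤ Γ / (1 + E) := by positivity
        rw [truncPow_eq (h0.trans hs.1) hs.2]
        gcongr
        exact hs.1)
    rw [(hsol _ hΓ_mem).1] at h1
    have h2 : (Γ / (1 + E)) ^ p = Γ ^ p * (1 / (1 + E)) ^ p := by
      rw [← mul_rpow hΓ.le (by positivity), mul_one_div]
    have h3 : (Γ / (1 + E)) ^ p / Lam / E / 2 * ((b - a) / 2) ^ 2 = Γ ^ p * c := by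
      rw [h2, hc]
      ring
    rw [← hE, h3, hγ_pow _ hA₁_pos, ← hΓ_def] at h1
    have h4 : 2 / c * Γ * c = 2 * Γ := by field_simp
    rw [h4] at h1
    linarith
  obtain ⟨s, hs, hsb⟩ : ∃ s ∈ Icc (γ A₀) Γ, w s b = 0 :=
    intermediate_value_Icc' hγΓ (hcont.mono (Icc_subset_Icc_left hsmall_mem.1))
      ⟨hlarge, hsmall⟩
  have hs' : s ∈ Icc 0 Γ := ⟨hsmall_mem.1.trans hs.1, hs.2⟩
  refine ⟨w s, u s, g s, hw s hs', hu s hs', (hsol s hs').2.2.1, (hsol s hs').2.1, hsb, ?_, ?_⟩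
  · refine pos_of_eq_zero_right (hw s hs') (hu s hs') (fun r hr =>
      (hbd s hs' r hr).2.2.2.trans (sub_le_self _ (div_nonneg (truncPow_nonneg _ _ _) hLam.le)))
      (hu0 s hs') ?_ hsb
    rw [(hsol s hs').1]
    exact (hγ_pos _ hA₀_pos).trans_le hs.1
  · intro r hr
    have h1 := ((hsol s hs').2.2.2 r hr).2.2
    rw [(hbd s hs' r hr).1, truncPow_eq (hsb ▸ hanti s hs' hr hb' hr.2)
      ((hws s hs' r hr).trans hs'.2)] at h1
    rw [h1, neg_neg]

/-- Theorem (mixed boundary value problem, Neumann at `|x| = a`, Dirichlet at `|x| = b`):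
`F(x,D²u) + |u|^{p−1}u = 0` in `A_{a,b}`, `∂u/∂n = 0` on `|x| = a`, `u = 0` on `|x| = b`,
has a positive and a negative radial solution. -/
theorem mixed_bvp_neumann_dirichlet_annulus
    (n : ℕ) (hn : 2 ≤ n) (lam Lam p : ℝ) (hlam : 0 < lam) (hlL : lam ≤ Lam) (hp : 1 < p)
    (F : ℝ → ℝ → ℝ → ℝ)
    (hFcont : Continuous fun x : ℝ × ℝ × ℝ => F x.1 x.2.1 x.2.2)
    (hF0 : ∀ r : ℝ, F r 0 0 = 0)
    (hFell : UnifElliptic n lam Lam F)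
    (a b : ℝ) (ha : 0 < a) (hab : a < b) :
    (∃ w w' w'' : ℝ → ℝ,
      (∀ r ∈ Icc a b, HasDerivAt w (w' r) r) ∧
      (∀ r ∈ Icc a b, HasDerivAt w' (w'' r) r) ∧
      ContinuousOn w'' (Icc a b) ∧
      w' a = 0 ∧ w b = 0 ∧
      (∀ r ∈ Ico a b, 0 < w r) ∧
      (∀ r ∈ Ioo a b, -F r (w'' r) (w' r / r) = w r ^ p)) ∧
    (∃ w w' w'' : ℝ → ℝ,
      (∀ r ∈ Icc a b, HasDerivAt w (w' r) r) ∧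
      (∀ r ∈ Icc a b, HasDerivAt w' (w'' r) r) ∧
      ContinuousOn w'' (Icc a b) ∧
      w' a = 0 ∧ w b = 0 ∧
      (∀ r ∈ Ico a b, w r < 0) ∧
      (∀ r ∈ Ioo a b, -F r (w'' r) (w' r / r) = -(|w r| ^ p))) := by
  have hn1 : 1 ≤ n := by omega
  constructor
  · obtain ⟨w, w', w'', h1, h2, h3, h4, h5, h6, h7⟩ :=
      exists_pos_mixed_bvp hn1 hlam hlL hp hFcont hF0 hFell ha hab
    exact ⟨w, w', w'', h1, h2, h3, h4, h5, h6, fun r hr => h7 r (Ioo_subset_Icc_self hr)⟩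
  · obtain ⟨w, w', w'', h1, h2, h3, h4, h5, h6, h7⟩ :=
      exists_pos_mixed_bvp (F := fun r m l => -F r (-m) (-l)) hn1 hlam hlL hp
        (hFcont.comp (continuous_fst.prodMk ((continuous_fst.comp continuous_snd).neg.prodMk
          (continuous_snd.comp continuous_snd).neg))).neg
        (fun r => by simp [hF0]) hFell.reflect ha hab
    refine ⟨fun r => -w r, fun r => -w' r, fun r => -w'' r, fun r hr => (h1 r hr).neg,
      fun r hr => (h2 r hr).neg, h3.neg, by simp [h4], by simp [h5],
      fun r hr => neg_neg_of_pos (h6 r hr), fun r hr => ?_⟩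
    have h8 := h7 r (Ioo_subset_Icc_self hr)
    rw [neg_neg] at h8
    rw [abs_neg, abs_of_pos (h6 r ⟨hr.1.le, hr.2⟩), neg_div, h8]
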